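/- (Non-abelian SL(2,ℂ) representations of the cinquefoil knot group.) Let m, d, s ∈ ℂ with m ≠ 0 and s² = m, and let X = [[s,1],[0,s⁻¹]], Y = [[s,0],[−d,s⁻¹]] ∈ SL(2,ℂ), with ω := X·Y·X·Y. Then the relation of the cinquefoil knot group presentation ⟨x,y | ωx = yω⟩ is satisfied, i.e. ω·X = Y·ω as matrices, if and only if d² − (2m + 2m⁻¹ − 1)·d + (m² − m + 1 − m⁻¹ + m⁻²) = 0. -/

import Mathlib

open Matrix

/-!
Put `τ = tr (XY)`. Since `det (XY) = 1`, Cayley–Hamilton expresses `(XY)ⁿ` through `XY` and `1`,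
with Chebyshev polynomials in `τ` as coefficients. Since moreover `tr X = tr Y`, it also gives
`XYX - YXY = (τ - 1) • (X - Y)`. Hence `(XY)ⁿX - Y(XY)ⁿ = (Sₙ(τ) - Sₙ₋₁(τ)) • (X - Y)`. As `X - Y`
has an entry `1`, the relation of the torus knot `T(2, 2n+1)` holds exactly when this scalar
vanishes. For the cinquefoil, `n = 2`, it is `τ² - τ - 1` with `τ = m + m⁻¹ - d`.
-/

open Polynomial.Chebyshev

variable {R : Type*} [CommRing R]

-- The indices are integers: for `n = 0` the coefficients are `S₋₁ = 0` and `S₋₂ = -1`.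
theorem pow_eq_eval_S_smul_sub {A : Type*} [Ring A] [Algebra R A] {a : A} {t : R}
    (ha : a ^ 2 = t • a - 1) (n : ℕ) :
    a ^ n = (S R (n - 1)).eval t • a - (S R (n - 2)).eval t • (1 : A) := by
  induction n with
  | zero => simp
  | succ n ih =>
    have hS : (S R n).eval t = t * (S R (n - 1)).eval t - (S R (n - 2)).eval t := by
      simp [S_eq R n]
    calc a ^ (n + 1)
        = (S R (n - 1)).eval t • a ^ 2 - (S R (n - 2)).eval t • a := by
          rw [pow_succ, ih, sub_mul, smul_mul_assoc, smul_mul_assoc, one_mul, sq]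
      _ = (S R n).eval t • a - (S R (n - 1)).eval t • (1 : A) := by
          rw [ha, hS]
          module
      _ = _ := by
          push_cast
          rw [add_sub_cancel_right, show (n : ℤ) + 1 - 2 = n - 1 by ring]

section FinTwo

variable (A B : Matrix (Fin 2) (Fin 2) R)

theorem adjugate_fin_two_eq_trace_smul_one_sub : A.adjugate = A.trace • 1 - A := by
  ext i j
  fin_cases i <;> fin_cases j <;> simp [adjugate_fin_two, trace_fin_two]

theorem sq_fin_two_eq_trace_smul_sub_det_smul_one : A ^ 2 = A.trace • A - A.det • 1 := by
  rw [← mul_adjugate, adjugate_fin_two_eq_trace_smul_one_sub, mul_sub, mul_smul_comm, mul_one, sq,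
    sub_sub_cancel]

theorem mul_mul_self_fin_two_eq_trace_smul_sub :
    A * B * A = (A * B).trace • A - A.det • B.adjugate := by
  calc A * B * A
      = ((A * B).trace • 1 - (A * B).adjugate) * A := by
        rw [adjugate_fin_two_eq_trace_smul_one_sub, sub_sub_cancel]
    _ = (A * B).trace • A - A.det • B.adjugate := by
        rw [adjugate_mul_distrib, sub_mul, smul_mul_assoc, one_mul, mul_assoc, adjugate_mul,
          mul_smul_comm, mul_one]

variable {A B}

theorem mul_mul_self_sub_fin_two_eq_smul_sub (htr : A.trace = B.trace) (hdet : A.det = B.det) :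
    A * B * A - B * (A * B) = ((A * B).trace - A.det) • (A - B) := by
  rw [← mul_assoc, mul_mul_self_fin_two_eq_trace_smul_sub A B,
    mul_mul_self_fin_two_eq_trace_smul_sub B A, trace_mul_comm B A,
    adjugate_fin_two_eq_trace_smul_one_sub A, adjugate_fin_two_eq_trace_smul_one_sub B, htr, hdet]
  module

theorem mul_pow_mul_sub_fin_two_eq_smul_sub (hA : A.det = 1) (hB : B.det = 1)
    (htr : A.trace = B.trace) (n : ℕ) :
    (A * B) ^ n * A - B * (A * B) ^ n =
      (S R n - S R (n - 1)).eval (A * B).trace • (A - B) := by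
  set t := (A * B).trace
  have hpow : (A * B) ^ n =
      (S R (n - 1)).eval t • (A * B) - (S R (n - 2)).eval t • 1 := by
    refine pow_eq_eval_S_smul_sub ?_ n
    rw [sq_fin_two_eq_trace_smul_sub_det_smul_one, det_mul, hA, hB, one_mul, one_smul]
  have hbase : A * B * A - B * (A * B) = (t - 1) • (A - B) := by
    rw [mul_mul_self_sub_fin_two_eq_smul_sub htr (hA.trans hB.symm), hA]
  calc (A * B) ^ n * A - B * (A * B) ^ n
      = (S R (n - 1)).eval t • (A * B * A - B * (A * B)) -
          (S R (n - 2)).eval t • (A - B) := by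
        simp only [hpow, sub_mul, mul_sub, smul_mul_assoc, mul_smul_comm, one_mul, mul_one]
        module
    _ = (S R n - S R (n - 1)).eval t • (A - B) := by
        rw [hbase, S_eq R n]
        simp only [Polynomial.eval_sub, Polynomial.eval_mul, Polynomial.eval_X]
        module

end FinTwo

section Riley

/-- The image of the first generator of a two-bridge knot group under a representation in Riley's
normal form; its eigenvalues are `s` and `s⁻¹`. -/
def rileyX (s : Rˣ) : Matrix (Fin 2) (Fin 2) R :=
  !![(s : R), 1; 0, (↑s⁻¹ : R)]

/-- The image of the second generator of a two-bridge knot group under a representation in Riley's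
normal form. The sign of `d` makes `tr (XY) = s² + s⁻² - d`. -/
def rileyY (s : Rˣ) (d : R) : Matrix (Fin 2) (Fin 2) R :=
  !![(s : R), 0; -d, (↑s⁻¹ : R)]

variable (s : Rˣ) (d : R)

theorem det_rileyX : (rileyX s).det = 1 := by
  simp [rileyX]

theorem det_rileyY : (rileyY s d).det = 1 := by
  simp [rileyY]

theorem trace_rileyX_eq_trace_rileyY : (rileyX s).trace = (rileyY s d).trace := by
  simp [rileyX, rileyY]

theorem trace_rileyX_mul_rileyY :
    (rileyX s * rileyY s d).trace = ↑(s ^ 2) + ↑(s ^ 2)⁻¹ - d := by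
  rw [rileyX, rileyY, mul_fin_two, trace_fin_two_of, ← inv_pow, Units.val_pow_eq_pow_val,
    Units.val_pow_eq_pow_val]
  ring

theorem smul_rileyX_sub_rileyY_eq_zero_iff {c : R} :
    c • (rileyX s - rileyY s d) = 0 ↔ c = 0 := by
  refine ⟨fun h ↦ ?_, fun h ↦ by rw [h, zero_smul]⟩
  simpa [rileyX, rileyY] using congrFun₂ h 0 1

theorem riley_torusKnot_relation_iff (n : ℕ) :
    (rileyX s * rileyY s d) ^ n * rileyX s = rileyY s d * (rileyX s * rileyY s d) ^ n ↔
      (S R n - S R (n - 1)).eval (↑(s ^ 2) + ↑(s ^ 2)⁻¹ - d) = 0 := by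
  rw [← sub_eq_zero, mul_pow_mul_sub_fin_two_eq_smul_sub (det_rileyX s) (det_rileyY s d)
    (trace_rileyX_eq_trace_rileyY s d), smul_rileyX_sub_rileyY_eq_zero_iff,
    trace_rileyX_mul_rileyY]

end Riley

theorem cinquefoil_representation_general (m : Rˣ) (d : R) (s : Rˣ) (hs : s ^ 2 = m)
    (X Y ω : Matrix (Fin 2) (Fin 2) R)
    (hX : X = !![(s : R), 1; 0, (↑s⁻¹ : R)]) (hY : Y = !![(s : R), 0; -d, (↑s⁻¹ : R)])
    (hω : ω = X * Y * X * Y) :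
    ω * X = Y * ω ↔
      d ^ 2 - (2 * (m : R) + 2 * (↑m⁻¹ : R) - 1) * d +
        ((m : R) ^ 2 - m + 1 - (↑m⁻¹ : R) + (↑(m ^ 2)⁻¹ : R)) = 0 := by
  obtain rfl : X = rileyX s := hX
  obtain rfl : Y = rileyY s d := hY
  have hω_sq : ω = (rileyX s * rileyY s d) ^ 2 := by rw [hω, sq, ← mul_assoc]
  have hS : (S R (2 : ℕ) - S R ((2 : ℕ) - 1)).eval ((m : R) + (↑m⁻¹ : R) - d) =
      d ^ 2 - (2 * (m : R) + 2 * (↑m⁻¹ : R) - 1) * d +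
        ((m : R) ^ 2 - m + 1 - (↑m⁻¹ : R) + (↑(m ^ 2)⁻¹ : R)) := by
    simp only [Nat.cast_ofNat, S_two, Int.reduceSub, S_one, Polynomial.eval_sub,
      Polynomial.eval_pow, Polynomial.eval_X, Polynomial.eval_one, ← inv_pow,
      Units.val_pow_eq_pow_val]
    linear_combination 2 * m.mul_inv
  rw [hω_sq, riley_torusKnot_relation_iff, hs, hS]

/-- (Non-abelian `SL(2,ℂ)` representations of the cinquefoil knot group.)
With `X = [[s,1],[0,s⁻¹]]`, `Y = [[s,0],[−d,s⁻¹]]`, `s² = m`, and `ω = XYXY`, the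
relation `ω X = Y ω` of the presentation `⟨x,y ∣ ωx = yω⟩` holds iff
`d² − (2m + 2m⁻¹ − 1)d + (m² − m + 1 − m⁻¹ + m⁻²) = 0`. -/
theorem cinquefoil_representation (m d s : ℂ) (hm : m ≠ 0) (hs : s ^ 2 = m)
    (X Y ω : Matrix (Fin 2) (Fin 2) ℂ)
    (hX : X = !![s, 1; 0, s⁻¹]) (hY : Y = !![s, 0; -d, s⁻¹])
    (hω : ω = X * Y * X * Y) :
    ω * X = Y * ω ↔
      d ^ 2 - (2 * m + 2 * m⁻¹ - 1) * d +
        (m ^ 2 - m + 1 - m⁻¹ + (m ^ 2)⁻¹) = 0 := by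
  have hs0 : s ≠ 0 := ne_zero_pow two_ne_zero (hs ▸ hm)
  simpa using cinquefoil_representation_general (.mk0 m hm) d (.mk0 s hs0) (Units.ext hs)
    X Y ω hX hY hω
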